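/- Let A be a deterministic OCA over a nonempty finite alphabet Σ with L_vis(A) ⊆ Enc_Σ. Then for every w ∈ (Σ×ℕ)*, w ∈ L_obs(A) if and only if the unique run ρ of A with vis(trace(ρ)) = enc(w) is accepting. -/

import Mathlib

/-! Common framework: one-counter automata (OCAs) over a finite alphabet,
with the classical (`oca`), visibly (`vis`) and observability (`obs`) semantics. -/

/-- Letters from an alphabet `α` together with the two counter operations
`inc` and `dec`. -/
inductive Vis (α : Type*) : Type _ where
  | sym : α → Vis α
  | inc : Vis α
  | dec : Vis α

/-- A one-counter automaton (an `m`-OCA) over alphabet `α` with state set `Q`: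
an initial state, a set of final states, a threshold `m`, and a transition
relation `Δ ⊆ Q × {0,…,m} × (α ∪ {inc,dec}) × Q`. -/
structure OCA (Q : Type*) (α : Type*) where
  init : Q
  final : Set Q
  m : ℕ
  Δ : Set (Q × ℕ × Vis α × Q)
  valid : ∀ t ∈ Δ, t.2.1 ≤ m

variable {Q α : Type*}

/-- One step of an OCA, labeled by an element of `(α × ℕ) ∪ {inc, dec}`. -/
def OCA.step (A : OCA Q α) : Q × ℕ → Vis (α × ℕ) → Q × ℕ → Prop
  | (q, x), Vis.inc, (q', x') => x' = x + 1 ∧ (q, min x A.m, Vis.inc, q') ∈ A.Δ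
  | (q, x), Vis.dec, (q', x') => 1 ≤ x ∧ x' = x - 1 ∧ (q, min x A.m, Vis.dec, q') ∈ A.Δ
  | (q, x), Vis.sym (a, y), (q', x') => y = x ∧ x' = x ∧ (q, min x A.m, Vis.sym a, q') ∈ A.Δ

/-- `A.RunFrom c ts cs` holds if there is a partial run of `A` starting in
configuration `c`, with trace `ts`, visiting exactly the configurations
listed in `cs` (starting with `c`). -/
inductive OCA.RunFrom (A : OCA Q α) : Q × ℕ → List (Vis (α × ℕ)) → List (Q × ℕ) → Prop
  | nil (c : Q × ℕ) : OCA.RunFrom A c [] [c]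
  | cons {c c' : Q × ℕ} {τ : Vis (α × ℕ)} {ts : List (Vis (α × ℕ))} {cs : List (Q × ℕ)} :
      A.step c τ c' → OCA.RunFrom A c' ts cs → OCA.RunFrom A c (τ :: ts) (c :: cs)

/-- `ts` is the trace of some accepting run of `A` (a run starting in the
initial configuration `(ι,0)` whose last configuration has a final state). -/
def OCA.AccTrace (A : OCA Q α) (ts : List (Vis (α × ℕ))) : Prop :=
  ∃ cs c, A.RunFrom (A.init, 0) ts cs ∧ cs.getLast? = some c ∧ c.1 ∈ A.final

/-- Projection of a trace letter used for the visibly semantics: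
`(a,x)` becomes `a`, and `inc`/`dec` are kept. -/
def visOf : Vis (α × ℕ) → Vis α
  | Vis.sym (a, _) => Vis.sym a
  | Vis.inc => Vis.inc
  | Vis.dec => Vis.dec

/-- The visibly projection of a trace. -/
def visMap (ts : List (Vis (α × ℕ))) : List (Vis α) := ts.map visOf

/-- The observability projection of a trace: keep the pairs `(a,x)`,
erase `inc`/`dec`. -/
def obsMap (ts : List (Vis (α × ℕ))) : List (α × ℕ) :=
  ts.filterMap fun τ => match τ with
    | Vis.sym p => some p
    | _ => none

/-- The classical projection of a trace: `(a,x)` becomes `a`,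
`inc`/`dec` are erased. -/
def ocaMap (ts : List (Vis (α × ℕ))) : List α :=
  ts.filterMap fun τ => match τ with
    | Vis.sym (a, _) => some a
    | _ => none

/-- The visibly semantics `L_vis(A)`. -/
def OCA.Lvis (A : OCA Q α) : Set (List (Vis α)) :=
  {w | ∃ ts, A.AccTrace ts ∧ visMap ts = w}

/-- The observability semantics `L_obs(A)`. -/
def OCA.Lobs (A : OCA Q α) : Set (List (α × ℕ)) :=
  {w | ∃ ts, A.AccTrace ts ∧ obsMap ts = w}

/-- The classical semantics `L_oca(A)`. -/
def OCA.Loca (A : OCA Q α) : Set (List α) :=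
  {w | ∃ ts, A.AccTrace ts ∧ ocaMap ts = w}

/-- An OCA is deterministic if for every state `q`, counter test `k ≤ m` and
letter `σ ∈ α ∪ {inc,dec}` there is exactly one target state. -/
def OCA.Deterministic (A : OCA Q α) : Prop :=
  ∀ (q : Q) (k : ℕ) (σ : Vis α), k ≤ A.m → ∃! q' : Q, (q, k, σ, q') ∈ A.Δ

/-- Test for the letter `inc`. -/
def isIncB : Vis α → Bool
  | Vis.inc => true
  | _ => false

/-- Test for the letter `dec`. -/
def isDecB : Vis α → Bool
  | Vis.dec => true
  | _ => false

/-- Well-formed words over `α ∪ {inc,dec}`: no prefix contains more `dec`'s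
than `inc`'s. -/
def WFWords (α : Type*) : Set (List (Vis α)) :=
  {w | ∀ p, p <+: w → p.countP isDecB ≤ p.countP isIncB}

/-- `encFrom x0 w` encodes `w ∈ (α × ℕ)*` starting from previous counter
value `x0`: each `(a,x)` becomes `inc^(x-x0) a` (if `x ≥ x0`) or
`dec^(x0-x) a` (otherwise). -/
def encFrom : ℕ → List (α × ℕ) → List (Vis α)
  | _, [] => []
  | x0, (a, x) :: w =>
      (if x0 ≤ x then List.replicate (x - x0) Vis.inc
       else List.replicate (x0 - x) Vis.dec) ++ Vis.sym a :: encFrom x w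

/-- The encoding `enc : (α × ℕ)* → (α ∪ {inc,dec})*`. -/
def enc (w : List (α × ℕ)) : List (Vis α) := encFrom 0 w

/-- The set `Enc_α` of valid encodings. -/
def EncSet (α : Type*) : Set (List (Vis α)) := Set.range (enc (α := α))

/-- A set `S ⊆ ℕ` is ultimately periodic if there are `t` and `d ≥ 1` such
that for all `x ≥ t`, `x ∈ S ↔ x + d ∈ S`. -/
def UltPeriodic (S : Set ℕ) : Prop :=
  ∃ t d : ℕ, 1 ≤ d ∧ ∀ x : ℕ, t ≤ x → (x ∈ S ↔ x + d ∈ S)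

/-- An extended OCA (eOCA): transitions are guarded by ultimately periodic
sets of counter values, and acceptance is given by an ultimately periodic set
of counter values for each state. -/
structure EOCA (Q : Type*) (α : Type*) where
  init : Q
  f : Q → Set ℕ
  hf : ∀ q, UltPeriodic (f q)
  Δ : Set (Q × Set ℕ × Vis α × Q)
  hΔfin : Δ.Finite
  hΔup : ∀ t ∈ Δ, UltPeriodic t.2.1

/-- One step of an eOCA. -/
def EOCA.step (A : EOCA Q α) : Q × ℕ → Vis (α × ℕ) → Q × ℕ → Prop
  | (q, x), Vis.inc, (q', x') =>
      x' = x + 1 ∧ ∃ S, (q, S, Vis.inc, q') ∈ A.Δ ∧ x ∈ S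
  | (q, x), Vis.dec, (q', x') =>
      1 ≤ x ∧ x' = x - 1 ∧ ∃ S, (q, S, Vis.dec, q') ∈ A.Δ ∧ x ∈ S
  | (q, x), Vis.sym (a, y), (q', x') =>
      y = x ∧ x' = x ∧ ∃ S, (q, S, Vis.sym a, q') ∈ A.Δ ∧ x ∈ S

/-- Partial runs of an eOCA, as for OCAs. -/
inductive EOCA.RunFrom (A : EOCA Q α) : Q × ℕ → List (Vis (α × ℕ)) → List (Q × ℕ) → Prop
  | nil (c : Q × ℕ) : EOCA.RunFrom A c [] [c]
  | cons {c c' : Q × ℕ} {τ : Vis (α × ℕ)} {ts : List (Vis (α × ℕ))} {cs : List (Q × ℕ)} :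
      A.step c τ c' → EOCA.RunFrom A c' ts cs → EOCA.RunFrom A c (τ :: ts) (c :: cs)

/-- Accepting traces of an eOCA: the last configuration `(q,x)` satisfies
`x ∈ f q`. -/
def EOCA.AccTrace (A : EOCA Q α) (ts : List (Vis (α × ℕ))) : Prop :=
  ∃ cs c, A.RunFrom (A.init, 0) ts cs ∧ cs.getLast? = some c ∧ c.2 ∈ A.f c.1

/-- The visibly semantics of an eOCA. -/
def EOCA.Lvis (A : EOCA Q α) : Set (List (Vis α)) :=
  {w | ∃ ts, A.AccTrace ts ∧ visMap ts = w}

/-- The observability semantics of an eOCA. -/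
def EOCA.Lobs (A : EOCA Q α) : Set (List (α × ℕ)) :=
  {w | ∃ ts, A.AccTrace ts ∧ obsMap ts = w}

/-- The classical semantics of an eOCA. -/
def EOCA.Loca (A : EOCA Q α) : Set (List α) :=
  {w | ∃ ts, A.AccTrace ts ∧ ocaMap ts = w}

/-!
The counter value at which a run reads a letter is determined by the counter operations preceding
that letter, so reading these values off turns the visibly word of a run into its observability
word. On valid encodings this decoding inverts `enc`. Hence, if every accepted visibly word is an
encoding, an accepting run observing `w` can only have the visibly word `enc w`.
-/

/-- Decodes a visibly word read from counter value `x` into its observability word, by pairing each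
letter with the current counter value. On a `dec` at counter value `0`, which no run can perform,
the truncated subtraction leaves the counter at `0`. -/
def decodeFrom : ℕ → List (Vis α) → List (α × ℕ)
  | _, [] => []
  | x, Vis.inc :: u => decodeFrom (x + 1) u
  | x, Vis.dec :: u => decodeFrom (x - 1) u
  | x, Vis.sym a :: u => (a, x) :: decodeFrom x u

theorem decodeFrom_replicate_inc_append (n x : ℕ) (u : List (Vis α)) :
    decodeFrom x (List.replicate n Vis.inc ++ u) = decodeFrom (x + n) u := by
  induction n generalizing x with
  | zero => rfl
  | succ n ih =>
    rw [List.replicate_succ, List.cons_append, decodeFrom, ih, Nat.add_assoc, Nat.add_comm 1 n]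

theorem decodeFrom_replicate_dec_append (n x : ℕ) (u : List (Vis α)) :
    decodeFrom x (List.replicate n Vis.dec ++ u) = decodeFrom (x - n) u := by
  induction n generalizing x with
  | zero => rfl
  | succ n ih =>
    rw [List.replicate_succ, List.cons_append, decodeFrom, ih, Nat.sub_sub, Nat.add_comm 1 n]

theorem leftInverse_decodeFrom_encFrom (x : ℕ) :
    Function.LeftInverse (decodeFrom (α := α) x) (encFrom x) := by
  intro w
  induction w generalizing x with
  | nil => rfl
  | cons p w ih =>
    obtain ⟨a, y⟩ := p
    rw [encFrom]
    split_ifs with hxy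
    · rw [decodeFrom_replicate_inc_append, Nat.add_sub_cancel' hxy, decodeFrom, ih]
    · rw [decodeFrom_replicate_dec_append, Nat.sub_sub_self (Nat.le_of_not_le hxy), decodeFrom, ih]

namespace OCA

theorem RunFrom.decodeFrom_visMap {A : OCA Q α} {c : Q × ℕ} {ts : List (Vis (α × ℕ))}
    {cs : List (Q × ℕ)} (h : A.RunFrom c ts cs) : decodeFrom c.2 (visMap ts) = obsMap ts := by
  induction h with
  | nil c => rfl
  | @cons c c' τ ts cs hstep _ ih =>
    obtain ⟨q, x⟩ := c
    obtain ⟨q', x'⟩ := c'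
    rcases τ with ⟨a, y⟩ | _ | _
    · obtain ⟨rfl, rfl, -⟩ := hstep
      exact congrArg (List.cons (a, _)) ih
    · obtain ⟨rfl, -⟩ := hstep
      exact ih
    · obtain ⟨-, rfl, -⟩ := hstep
      exact ih

theorem AccTrace.decodeFrom_visMap {A : OCA Q α} {ts : List (Vis (α × ℕ))} (h : A.AccTrace ts) :
    decodeFrom 0 (visMap ts) = obsMap ts :=
  let ⟨_, _, hrun, _⟩ := h
  hrun.decodeFrom_visMap

theorem image_decodeFrom_lvis (A : OCA Q α) : decodeFrom 0 '' A.Lvis = A.Lobs :=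
  calc decodeFrom 0 '' (visMap '' {ts | A.AccTrace ts})
      = (fun ts ↦ decodeFrom 0 (visMap ts)) '' {ts | A.AccTrace ts} := Set.image_image ..
    _ = obsMap '' {ts | A.AccTrace ts} :=
        Set.image_congr fun _ hts ↦ AccTrace.decodeFrom_visMap hts

theorem lobs_eq_preimage_enc {A : OCA Q α} (henc : A.Lvis ⊆ EncSet α) :
    A.Lobs = enc ⁻¹' A.Lvis :=
  calc A.Lobs = decodeFrom 0 '' A.Lvis := A.image_decodeFrom_lvis.symm
    _ = decodeFrom 0 '' (enc '' (enc ⁻¹' A.Lvis)) := by rw [Set.image_preimage_eq_of_subset henc]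
    _ = enc ⁻¹' A.Lvis := (leftInverse_decodeFrom_encFrom 0).image_image _

theorem mem_lvis_iff_exists_runFrom {A : OCA Q α} {u : List (Vis α)} :
    u ∈ A.Lvis ↔ ∃ ts cs, A.RunFrom (A.init, 0) ts cs ∧ visMap ts = u ∧
      ∃ c, cs.getLast? = some c ∧ c.1 ∈ A.final := by
  constructor
  · rintro ⟨ts, ⟨cs, c, hrun, hlast, hfinal⟩, hvis⟩
    exact ⟨ts, cs, hrun, hvis, c, hlast, hfinal⟩
  · rintro ⟨ts, cs, hrun, hvis, c, hlast, hfinal⟩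
    exact ⟨ts, ⟨cs, c, hrun, hlast, hfinal⟩, hvis⟩

end OCA

theorem stmt13_general (A : OCA Q α) (henc : A.Lvis ⊆ EncSet α) (w : List (α × ℕ)) :
    w ∈ A.Lobs ↔
      ∃ ts cs, A.RunFrom (A.init, 0) ts cs ∧ visMap ts = enc w ∧
        ∃ c, cs.getLast? = some c ∧ c.1 ∈ A.final := by
  rw [OCA.lobs_eq_preimage_enc henc, Set.mem_preimage, OCA.mem_lvis_iff_exists_runFrom]

/-- for a deterministic OCA whose visibly semantics consists of
valid encodings, a word `w` belongs to the observability semantics iff the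
(unique) run whose visibly trace is `enc w` is accepting. -/
theorem stmt13 {α Q : Type} [Fintype α] [Nonempty α] [Fintype Q]
    (A : OCA Q α) (hdet : A.Deterministic) (henc : A.Lvis ⊆ EncSet α) :
    ∀ w : List (α × ℕ),
      w ∈ A.Lobs ↔
        ∃ ts cs, A.RunFrom (A.init, 0) ts cs ∧ visMap ts = enc w ∧
          ∃ c, cs.getLast? = some c ∧ c.1 ∈ A.final :=
  stmt13_general A henc
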